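/- Relation (B1): Let u be a 0-grassmannian affine permutation and let a < b, c < d be integers with b − a ≤ k, d − c ≤ k. If either a < c < b < d, or (b = c and d − a > n), then neither the composite u·t_{a,b}·t_{c,d} nor the composite u·t_{c,d}·t_{a,b} is defined. -/

import Mathlib

open Function

/-- The affine transposition `t_{a,b}` of period `n`: it exchanges `a + m*n` and
`b + m*n` for every `m : ℤ` and fixes all other integers. -/
def affT (n a b : ℤ) : ℤ → ℤ := fun i =>
  if (i - a) % n = 0 then i - a + b
  else if (i - b) % n = 0 then i - b + a
  else i

/-- `u` is an affine permutation of period `n`: a bijection of `ℤ` with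
`u (i + n) = u i + n` and `∑_{i=1}^{n} u i = n (n+1) / 2`. -/
def IsAffinePerm (n : ℤ) (u : ℤ → ℤ) : Prop :=
  Function.Bijective u ∧ (∀ i : ℤ, u (i + n) = u i + n) ∧
    ∑ i ∈ Finset.Icc (1 : ℤ) n, u i = n * (n + 1) / 2

/-- The operator `t_{a,b}` is defined at `u`:
`u a ≤ 0 < u b` and for every `a < i < b`, either `u i < u a` or `u i > u b`. -/
def DefinedAt (u : ℤ → ℤ) (a b : ℤ) : Prop :=
  u a ≤ 0 ∧ 0 < u b ∧ ∀ i : ℤ, a < i → i < b → u i < u a ∨ u b < u i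

/-- `u` is 0-grassmannian: the positions of the values `1, 2, …, n` under `u`
appear in increasing order, i.e. `u⁻¹ 1 < u⁻¹ 2 < ⋯ < u⁻¹ n`. -/
def IsGrassmannian (n : ℤ) (u : ℤ → ℤ) : Prop :=
  ∀ i j p q : ℤ, 1 ≤ i → i < j → j ≤ n → u p = i → u q = j → p < q

/-- The composite `u · t_{a,b} · t_{c,d}` is defined. -/
def Def2 (n : ℤ) (u : ℤ → ℤ) (a b c d : ℤ) : Prop :=
  DefinedAt u a b ∧ DefinedAt (u ∘ affT n a b) c d

/-- The composite `u · t_{a₁,b₁} · t_{a₂,b₂} · t_{a₃,b₃}` is defined. -/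
def Def3 (n : ℤ) (u : ℤ → ℤ) (a₁ b₁ a₂ b₂ a₃ b₃ : ℤ) : Prop :=
  DefinedAt u a₁ b₁ ∧ DefinedAt (u ∘ affT n a₁ b₁) a₂ b₂ ∧
    DefinedAt ((u ∘ affT n a₁ b₁) ∘ affT n a₂ b₂) a₃ b₃

/-!
Since `t_{a,b}` requires `u a ≤ 0 < u b`, every position strictly between `a` and `b` carries either
a nonpositive value below `u a` or a positive value above `u b`. If `a < c < b < d`, the two
operators compare the same pair of values in opposite directions: `u a, u c` when `t_{a,b}` acts
first, `u b, u d` when `t_{c,d}` does. If `b = c` and `d - a > n`, then `d - n` lies between `a` and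
`b`, and `a + n` between `b` and `d`; either composite then forces `0 < u d < u (a + n) ≤ n`, so a
0-grassmannian `u` would have `d < a + n`.
-/

section AffT

variable {n a b i : ℤ}

theorem affT_left (n a b : ℤ) : affT n a b a = b := by
  simp [affT]

theorem affT_right (h : ¬ n ∣ b - a) : affT n a b b = a := by
  simp [affT, h]

theorem affT_of_not_dvd (ha : ¬ n ∣ i - a) (hb : ¬ n ∣ i - b) : affT n a b i = i := by
  simp [affT, ha, hb]

theorem affT_right_of_lt (hab : a < b) (hba : b < a + n) : affT n a b b = a :=
  affT_right fun h => by
    have := Int.le_of_dvd (by lia) h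
    lia

theorem affT_of_lt_of_lt (hba : b < a + n) (hai : a < i) (hib : i < b) : affT n a b i = i := by
  refine affT_of_not_dvd (fun h => ?_) (fun h => ?_)
  · have := Int.le_of_dvd (by lia) h
    lia
  · have := Int.le_of_dvd (by lia) (dvd_sub_comm.mp h)
    lia

theorem affT_add_period (n a b i : ℤ) : affT n a b (i + n) = affT n a b i + n := by
  simp only [affT, add_sub_right_comm i n, Int.add_emod_right]
  split_ifs <;> ring

theorem affT_sub_period (n a b i : ℤ) : affT n a b (i - n) = affT n a b i - n := by
  rw [eq_sub_iff_add_eq, ← affT_add_period, sub_add_cancel]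

end AffT

namespace DefinedAt

variable {u : ℤ → ℤ} {a b i : ℤ}

theorem apply_lt_left (h : DefinedAt u a b) (hai : a < i) (hib : i < b) (hi : u i ≤ 0) :
    u i < u a :=
  (h.2.2 i hai hib).resolve_right (hi.trans_lt h.2.1).not_gt

theorem right_lt_apply (h : DefinedAt u a b) (hai : a < i) (hib : i < b) (hi : 0 < u i) :
    u b < u i :=
  (h.2.2 i hai hib).resolve_left (h.1.trans_lt hi).not_gt

end DefinedAt

section Crossing

variable {n : ℤ} {u : ℤ → ℤ} {a b c d : ℤ}

theorem not_def2_of_crossing (hba : b < a + n) (hac : a < c) (hcb : c < b) (hbd : b < d) :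
    ¬ Def2 n u a b c d := by
  rintro ⟨hab, hcd⟩
  have hc : (u ∘ affT n a b) c = u c := congrArg u (affT_of_lt_of_lt hba hac hcb)
  have hb : (u ∘ affT n a b) b = u a := congrArg u (affT_right_of_lt (hac.trans hcb) hba)
  have hca : u c < u a := hab.apply_lt_left hac hcb (hc ▸ hcd.1)
  have hac' : u a < u c := by
    simpa only [hb, hc] using hcd.apply_lt_left hcb hbd (hb.trans_le hab.1)
  exact hca.asymm hac'

theorem not_def2_of_crossing_swap (hdc : d < c + n) (hac : a < c) (hcb : c < b) (hbd : b < d) :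
    ¬ Def2 n u c d a b := by
  rintro ⟨hcd, hab⟩
  have hb : (u ∘ affT n c d) b = u b := congrArg u (affT_of_lt_of_lt hdc hcb hbd)
  have hc : (u ∘ affT n c d) c = u d := congrArg u (affT_left n c d)
  have hdb : u d < u b := hcd.right_lt_apply hcb hbd (hb ▸ hab.2.1)
  have hbd' : u b < u d := by
    simpa only [hb, hc] using hab.right_lt_apply hac hcb (hcd.2.1.trans_eq hc.symm)
  exact hdb.asymm hbd'

end Crossing

section Consecutive

variable {n : ℤ} {u : ℤ → ℤ} {a b d : ℤ}

theorem apply_sub_period (hu : ∀ i, u (i + n) = u i + n) (i : ℤ) : u (i - n) = u i - n := by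
  rw [eq_sub_iff_add_eq, ← hu, sub_add_cancel]

theorem IsGrassmannian.apply_add_period_le (hg : IsGrassmannian n u)
    (hu : ∀ i, u (i + n) = u i + n) (ha : u a ≤ 0) (hd : 0 < u d) (had : a + n ≤ d) :
    u (a + n) ≤ u d := by
  by_contra! hlt
  have hle : u (a + n) ≤ n := by linarith [hu a]
  exact (hg _ _ d (a + n) hd hlt hle rfl rfl).not_ge had

theorem not_def2_of_consecutive (hu : ∀ i, u (i + n) = u i + n) (hg : IsGrassmannian n u)
    (hba : b < a + n) (had : a + n < d) (hdb : d < b + n) : ¬ Def2 n u a b b d := by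
  rintro ⟨hab, hbd⟩
  have hdn : u (d - n) = u d - n := apply_sub_period hu d
  have hd : (u ∘ affT n a b) d = u d := by
    have h := affT_of_lt_of_lt (i := d - n) hba (by lia) (by lia)
    rw [affT_sub_period, sub_left_inj] at h
    exact congrArg u h
  have han : (u ∘ affT n a b) (a + n) = u b + n := by
    rw [comp_apply, affT_add_period, affT_left, hu]
  have hd_pos : 0 < u d := hd ▸ hbd.2.1
  have hdb' : u d < u b + n := by
    simpa only [hd, han] using hbd.right_lt_apply hba had (by linarith [hab.2.1])
  have hda : u (d - n) < u a :=
    (hab.2.2 (d - n) (by lia) (by lia)).resolve_right (by linarith)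
  linarith [hg.apply_add_period_le hu hab.1 hd_pos had.le, hu a]

theorem not_def2_of_consecutive_swap (hu : ∀ i, u (i + n) = u i + n) (hg : IsGrassmannian n u)
    (hba : b < a + n) (had : a + n < d) (hdb : d < b + n) : ¬ Def2 n u b d a b := by
  rintro ⟨hbd, hab⟩
  have ha : (u ∘ affT n b d) a = u a := by
    have h := affT_of_lt_of_lt hdb hba had
    rw [affT_add_period, add_left_inj] at h
    exact congrArg u h
  have hdn : (u ∘ affT n b d) (d - n) = u b - n := by
    rw [comp_apply, affT_sub_period, affT_right_of_lt (by lia) hdb, apply_sub_period hu]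
  have ha_nonpos : u a ≤ 0 := ha ▸ hab.1
  have hba' : u b - n < u a := by
    simpa only [ha, hdn] using
      hab.apply_lt_left (i := d - n) (by lia) (by lia) (by linarith [hbd.1])
  have hda : u d < u (a + n) :=
    (hbd.2.2 (a + n) hba had).resolve_left (by linarith [hu a])
  exact hda.not_ge (hg.apply_add_period_le hu ha_nonpos hbd.2.1 had.le)

end Consecutive

theorem stmt4_general {n : ℤ} {u : ℤ → ℤ} (hu : ∀ i, u (i + n) = u i + n)
    (hg : IsGrassmannian n u) {a b c d : ℤ} (hba : b < a + n) (hdc : d < c + n)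
    (h : (a < c ∧ c < b ∧ b < d) ∨ (b = c ∧ a + n < d)) :
    ¬ Def2 n u a b c d ∧ ¬ Def2 n u c d a b := by
  rcases h with ⟨hac, hcb, hbd⟩ | ⟨rfl, had⟩
  · exact ⟨not_def2_of_crossing hba hac hcb hbd, not_def2_of_crossing_swap hdc hac hcb hbd⟩
  · exact ⟨not_def2_of_consecutive hu hg hba had hdc,
      not_def2_of_consecutive_swap hu hg hba had hdc⟩

theorem stmt4 (k : ℤ) (hk : 1 ≤ k) (u : ℤ → ℤ)
    (hu : IsAffinePerm (k + 1) u) (hg : IsGrassmannian (k + 1) u)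
    (a b c d : ℤ) (hab : a < b) (hba : b - a ≤ k) (hcd : c < d) (hdc : d - c ≤ k)
    (h : (a < c ∧ c < b ∧ b < d) ∨ (b = c ∧ d - a > k + 1)) :
    ¬ Def2 (k + 1) u a b c d ∧ ¬ Def2 (k + 1) u c d a b :=
  stmt4_general hu.2.1 hg (by lia) (by lia) (h.imp_right fun h => ⟨h.1, by lia⟩)
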